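/- Let Γ be a lattice in G = PSL(2,ℂ) and let xH be a closed H-orbit in Γ\G. Then there is an open subset O of Γ\G containing xH such that every closed H-orbit yH with yH ⊆ O is equal to xH. (This is the homogeneous formulation of the statement that every properly immersed geodesic plane in a hyperbolic 3-manifold of finite volume is topologically isolated.) -/

import Mathlib

open scoped MatrixGroups
open Matrix Filter

noncomputable section

/-- `SL(2,ℂ)`. -/
abbrev SL2C := Matrix.SpecialLinearGroup (Fin 2) ℂ

instance : TopologicalSpace SL2C := instTopologicalSpaceSubtype

/-- `G = PSL(2,ℂ) = SL(2,ℂ)/{±I}`, with the quotient topology. -/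
abbrev PSL2C := Matrix.ProjectiveSpecialLinearGroup (Fin 2) ℂ

/-- The projection `π : SL(2,ℂ) → PSL(2,ℂ)`. -/
def pr : SL2C →* PSL2C := QuotientGroup.mk' _

/-- The upper triangular unipotent matrix `[[1, t],[0, 1]]` as an element of `SL(2,ℂ)`. -/
def uMat (t : ℂ) : SL2C := ⟨!![1, t; 0, 1], by simp [Matrix.det_fin_two_of]⟩

/-- `u_t = π [[1, t],[0, 1]]` for `t ∈ ℝ`. -/
def uu (t : ℝ) : PSL2C := pr (uMat t)

/-- `v_s = π [[1, is],[0, 1]]` for `s ∈ ℝ`. -/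
def vv (s : ℝ) : PSL2C := pr (uMat (s * Complex.I))

/-- The subgroup `U = {u_t : t ∈ ℝ}` as a subset of `PSL(2,ℂ)`. -/
def Uset : Set PSL2C := Set.range uu

/-- The subgroup `V = {v_s : s ∈ ℝ}` as a subset of `PSL(2,ℂ)`. -/
def Vset : Set PSL2C := Set.range vv

/-- The subgroup `N = {π [[1, z],[0,1]] : z ∈ ℂ}` as a subset of `PSL(2,ℂ)`. -/
def Nset : Set PSL2C := {x | ∃ z : ℂ, x = pr (uMat z)}

/-- `H = π (SL(2,ℝ))`, the image in `PSL(2,ℂ)` of the real matrices. -/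
def Hset : Set PSL2C :=
  {x | ∃ g : Matrix.SpecialLinearGroup (Fin 2) ℝ,
    x = pr (Matrix.SpecialLinearGroup.map (algebraMap ℝ ℂ) g)}

/-- The upper triangular matrix `[[a, z],[0, a⁻¹]]` as an element of `SL(2,ℂ)`,
for a nonzero real `a`. -/
def tri (a : ℝ) (ha : a ≠ 0) (z : ℂ) : SL2C :=
  ⟨!![(a : ℂ), z; 0, (a : ℂ)⁻¹], by
    have h : (a : ℂ) ≠ 0 := by exact_mod_cast ha
    simp [Matrix.det_fin_two_of, mul_inv_cancel₀ h]⟩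

/-- `AN = {π [[a, z],[0, a⁻¹]] : a > 0 real, z ∈ ℂ}`. -/
def ANset : Set PSL2C := {x | ∃ (a : ℝ) (ha : 0 < a) (z : ℂ), x = pr (tri a ha.ne' z)}

/-- `AV = {π [[a, ib],[0, a⁻¹]] : a > 0 real, b ∈ ℝ}`. -/
def AVset : Set PSL2C :=
  {x | ∃ (a : ℝ) (ha : 0 < a) (b : ℝ), x = pr (tri a ha.ne' (b * Complex.I))}

/-- `A = {π diag(a, a⁻¹) : a > 0 real}`. -/
def Aset : Set PSL2C := {x | ∃ (a : ℝ) (ha : 0 < a), x = pr (tri a ha.ne' 0)}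

variable (Γ : Subgroup PSL2C)

/-- The space `Γ\\G` of right cosets `Γg`, with the quotient topology. -/
abbrev XΓ := Quotient (QuotientGroup.rightRel Γ)

/-- The natural projection `G → Γ\\G`. -/
def mkX (g : PSL2C) : XΓ Γ := Quotient.mk'' g

/-- The right translation action of `G` on `Γ\\G`: `(Γg₀)·g = Γ(g₀g)`. -/
def act (x : XΓ Γ) (g : PSL2C) : XΓ Γ :=
  Quotient.map' (fun h => h * g)
    (fun a b hab => by
      rw [QuotientGroup.rightRel_apply] at hab ⊢
      simpa [_root_.mul_inv_rev, mul_assoc] using hab) x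

/-- The orbit `xS = {x·s : s ∈ S}` of a point `x ∈ Γ\\G` under a subset `S ⊆ G`. -/
def orb (x : XΓ Γ) (S : Set PSL2C) : Set (XΓ Γ) := (fun s => act Γ x s) '' S

/-- `Γ` is a lattice in `G`: there is a nonzero finite Borel measure on `Γ\\G`
invariant under the right translation action of `G`. -/
def IsLattice : Prop :=
  letI : MeasurableSpace (XΓ Γ) := borel _
  ∃ μ : MeasureTheory.Measure (XΓ Γ), μ ≠ 0 ∧ MeasureTheory.IsFiniteMeasure μ ∧
    ∀ g : PSL2C, MeasureTheory.Measure.map (fun x => act Γ x g) μ = μ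


instance slTG : IsTopologicalGroup SL2C := Matrix.SpecialLinearGroup.topologicalGroup

instance slT2 : T2Space SL2C :=
  inferInstanceAs (T2Space {A : Matrix (Fin 2) (Fin 2) ℂ // A.det = 1})

instance slSC : SecondCountableTopology SL2C :=
  haveI : SecondCountableTopology (Matrix (Fin 2) (Fin 2) ℂ) :=
    inferInstanceAs (SecondCountableTopology (Fin 2 → Fin 2 → ℂ))
  TopologicalSpace.Subtype.secondCountableTopology {A : Matrix (Fin 2) (Fin 2) ℂ | A.det = 1}

theorem slClosedEmb : Topology.IsClosedEmbedding (Subtype.val : SL2C → Matrix (Fin 2) (Fin 2) ℂ) := by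
  refine IsClosed.isClosedEmbedding_subtypeVal (X := Matrix (Fin 2) (Fin 2) ℂ) ?_
  exact isClosed_eq (continuous_id.matrix_det) continuous_const

instance slLC : LocallyCompactSpace SL2C :=
  haveI : LocallyCompactSpace (Matrix (Fin 2) (Fin 2) ℂ) :=
    inferInstanceAs (LocallyCompactSpace (Fin 2 → Fin 2 → ℂ))
  slClosedEmb.locallyCompactSpace

theorem coe_conj (A M : SL2C) : (A⁻¹ * M * A).1 = A.1.adjugate * M.1 * A.1 := rfl

/-- complex conjugation on SL(2,ℂ) -/
def cj : SL2C →* SL2C := Matrix.SpecialLinearGroup.map (starRingEnd ℂ)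

/-- real matrices -/
def Hr : Subgroup SL2C :=
  (Matrix.SpecialLinearGroup.map (n := Fin 2) (algebraMap ℝ ℂ)).range

def FF (m : SL2C) : SL2C := m * (cj m)⁻¹

def dd (M : SL2C) : ℝ := ‖M.1 0 0 - 1‖ + ‖M.1 0 1‖ + ‖M.1 1 0‖ + ‖M.1 1 1 - 1‖

def phi (Γ : Subgroup PSL2C) (p : SL2C) : XΓ Γ := mkX Γ (pr p)

theorem continuous_cj : Continuous cj := by
  refine Continuous.subtype_mk ?_ _
  refine continuous_matrix fun i j => ?_
  have : Continuous fun x : SL2C => x.1 i j := continuous_subtype_val.matrix_elem i j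
  exact Complex.continuous_conj.comp this

theorem continuous_FF : Continuous FF := continuous_id.mul continuous_cj.inv

theorem continuous_entry (i j : Fin 2) : Continuous fun x : SL2C => x.1 i j :=
  continuous_subtype_val.matrix_elem i j

theorem continuous_dd : Continuous dd := by
  have := continuous_entry
  unfold dd
  fun_prop

theorem dd_one : dd 1 = 0 := by simp [dd]

theorem cj_apply (m : SL2C) (i j : Fin 2) : (cj m).1 i j = (starRingEnd ℂ) (m.1 i j) := rfl

theorem mem_Hr_iff (m : SL2C) : m ∈ Hr ↔ cj m = m := by
  constructor
  · rintro ⟨h, rfl⟩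
    ext i j
    change (starRingEnd ℂ) ((algebraMap ℝ ℂ) (h.1 i j)) = (algebraMap ℝ ℂ) (h.1 i j)
    simp
  · intro h
    have h2 : ∀ i j, (((m.1 i j).re : ℝ) : ℂ) = m.1 i j := by
      intro i j
      rw [← Complex.conj_eq_iff_re, ← cj_apply, h]
    refine ⟨⟨Matrix.of fun i j => (m.1 i j).re, ?_⟩, ?_⟩
    · have := m.2
      rw [Matrix.det_fin_two] at this ⊢
      apply Complex.ofReal_injective
      simp only [Matrix.of_apply]
      push_cast
      rw [h2, h2, h2, h2, this]
    · ext i j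
      exact h2 i j

theorem FF_eq_one (m : SL2C) : FF m = 1 ↔ m ∈ Hr := by
  rw [mem_Hr_iff, FF, mul_inv_eq_one, eq_comm]

theorem FF_mul_right (m h : SL2C) (hh : h ∈ Hr) : FF (m * h) = FF m := by
  rw [mem_Hr_iff] at hh
  simp [FF, hh]

theorem FF_mul_left (m h : SL2C) (hh : h ∈ Hr) : FF (h * m) = h * FF m * h⁻¹ := by
  rw [mem_Hr_iff] at hh
  simp [FF, hh, mul_assoc]

theorem cj_cj (m : SL2C) : cj (cj m) = m := by
  ext i j
  simp [cj_apply]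

theorem FF_eq_iff (m n : SL2C) (h : FF m = FF n) : m⁻¹ * n ∈ Hr := by
  rw [mem_Hr_iff]
  simp only [FF] at h
  rw [mul_inv_eq_iff_eq_mul] at h
  have h' : m⁻¹ * n = (cj m)⁻¹ * cj n := by
    conv_lhs => rw [h]
    simp [mul_assoc]
  calc cj (m⁻¹ * n) = (cj m)⁻¹ * cj n := by simp
    _ = m⁻¹ * n := h'.symm

theorem FF_cj (m : SL2C) : FF m * cj (FF m) = 1 := by
  simp [FF, cj_cj]

theorem isClosed_Hr : IsClosed (Hr : Set SL2C) := by
  have : (Hr : Set SL2C) = {m | cj m = m} := by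
    ext m; exact mem_Hr_iff m
  rw [this]
  exact isClosed_eq continuous_cj continuous_id

/-- real unipotents -/
def up (t : ℝ) : SL2C := ⟨!![1, (t : ℂ); 0, 1], by simp [Matrix.det_fin_two_of]⟩
def lo (t : ℝ) : SL2C := ⟨!![1, 0; (t : ℂ), 1], by simp [Matrix.det_fin_two_of]⟩

theorem up_mem (t : ℝ) : up t ∈ Hr := by
  rw [mem_Hr_iff]; ext i j; rw [cj_apply]; fin_cases i <;> fin_cases j <;> simp [up]
theorem lo_mem (t : ℝ) : lo t ∈ Hr := by
  rw [mem_Hr_iff]; ext i j; rw [cj_apply]; fin_cases i <;> fin_cases j <;> simp [lo]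
theorem up_zero : up 0 = 1 := by
  ext i j; fin_cases i <;> fin_cases j <;> simp [up]
theorem lo_zero : lo 0 = 1 := by
  ext i j; fin_cases i <;> fin_cases j <;> simp [lo]
theorem continuous_up : Continuous up := by
  refine Continuous.subtype_mk (continuous_matrix fun i j => ?_) _
  fin_cases i <;> fin_cases j <;> simp <;> fun_prop
theorem continuous_lo : Continuous lo := by
  refine Continuous.subtype_mk (continuous_matrix fun i j => ?_) _
  fin_cases i <;> fin_cases j <;> simp <;> fun_prop

theorem bounded_aff (a b : ℂ) (C : ℝ) (h : ∀ t : ℝ, ‖a + t * b‖ ≤ C) : b = 0 := by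
  by_contra hb
  have hb' : 0 < ‖b‖ := norm_pos_iff.mpr hb
  have h0 := h ((C + ‖a‖ + 1) / ‖b‖)
  have hC : 0 ≤ C := (norm_nonneg _).trans (h 0)
  have h1 : ‖(((C + ‖a‖ + 1) / ‖b‖ : ℝ) : ℂ) * b‖ = C + ‖a‖ + 1 := by
    rw [norm_mul, Complex.norm_real, Real.norm_of_nonneg (by positivity)]
    field_simp
  have h2 := norm_sub_le (a + (((C + ‖a‖ + 1) / ‖b‖ : ℝ) : ℂ) * b) a
  rw [add_sub_cancel_left, h1] at h2
  linarith

theorem bounded_conj (M : SL2C) (h1 : ∀ t, dd ((up t)⁻¹ * M * (up t)) < 1)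
    (h2 : ∀ t, dd ((lo t)⁻¹ * M * (lo t)) < 1) : M = 1 := by
  have hd := M.2
  rw [Matrix.det_fin_two] at hd
  have hc : M.1 1 0 = 0 := by
    have := bounded_aff (M.1 0 0 - 1) (-(M.1 1 0)) 1 (fun t => by
      have h := h1 t
      have e : ((up t)⁻¹ * M * (up t)).1 0 0 = M.1 0 0 + t * (-(M.1 1 0)) := by
        rw [coe_conj]
        simp [up, Matrix.vecMul_eq_sum, Matrix.mul_apply, Fin.sum_univ_two,
          Matrix.adjugate_fin_two]
        try ring
      unfold dd at h
      rw [e] at h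
      have e2 : M.1 0 0 - 1 + t * (-(M.1 1 0)) = M.1 0 0 + t * (-(M.1 1 0)) - 1 := by ring
      rw [e2]
      have := norm_nonneg (((up t)⁻¹ * M * (up t)).1 0 1)
      have := norm_nonneg (((up t)⁻¹ * M * (up t)).1 1 0)
      have := norm_nonneg (((up t)⁻¹ * M * (up t)).1 1 1 - 1)
      linarith)
    simpa using this
  have hb : M.1 0 1 = 0 := by
    have := bounded_aff (M.1 0 0 - 1) ((M.1 0 1)) 1 (fun t => by
      have h := h2 t
      have e : ((lo t)⁻¹ * M * (lo t)).1 0 0 = M.1 0 0 + t * ((M.1 0 1)) := by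
        rw [coe_conj]
        simp [lo, Matrix.vecMul_eq_sum, Matrix.mul_apply, Fin.sum_univ_two,
          Matrix.adjugate_fin_two]
        ring
      unfold dd at h
      rw [e] at h
      have e2 : M.1 0 0 - 1 + t * ((M.1 0 1)) = M.1 0 0 + t * ((M.1 0 1)) - 1 := by ring
      rw [e2]
      have := norm_nonneg (((lo t)⁻¹ * M * (lo t)).1 0 1)
      have := norm_nonneg (((lo t)⁻¹ * M * (lo t)).1 1 0)
      have := norm_nonneg (((lo t)⁻¹ * M * (lo t)).1 1 1 - 1)
      linarith)
    simpa using this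
  have ha : M.1 0 0 = M.1 1 1 := by
    have := bounded_aff (M.1 0 1) (M.1 0 0 - M.1 1 1) 1 (fun t => by
      have h := h1 t
      have e : ((up t)⁻¹ * M * (up t)).1 0 1 = M.1 0 1 + t * (M.1 0 0 - M.1 1 1) := by
        rw [coe_conj]
        simp [up, Matrix.vecMul_eq_sum, Matrix.mul_apply, Fin.sum_univ_two,
          Matrix.adjugate_fin_two, hc]
        ring
      unfold dd at h
      rw [e] at h
      have := norm_nonneg (((up t)⁻¹ * M * (up t)).1 0 0 - 1)
      have := norm_nonneg (((up t)⁻¹ * M * (up t)).1 1 0)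
      have := norm_nonneg (((up t)⁻¹ * M * (up t)).1 1 1 - 1)
      linarith)
    exact sub_eq_zero.mp this
  have hone : M.1 0 0 = 1 := by
    have h3 : (M.1 0 0 - 1) * (M.1 0 0 + 1) = 0 := by
      rw [hc, ← ha] at hd
      linear_combination hd
    rcases mul_eq_zero.mp h3 with h | h
    · exact sub_eq_zero.mp h
    · exfalso
      have h4 := h1 0
      rw [up_zero] at h4
      simp only [inv_one, one_mul, mul_one, dd] at h4
      have h5 : M.1 0 0 = -1 := eq_neg_of_add_eq_zero_left h
      rw [h5] at h4
      have h6 : ‖(-1 - 1 : ℂ)‖ = 2 := by norm_num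
      rw [h6] at h4
      have := norm_nonneg (M.1 0 1)
      have := norm_nonneg (M.1 1 0)
      have := norm_nonneg (M.1 1 1 - 1)
      linarith
  ext i j
  fin_cases i <;> fin_cases j
  · simpa using hone
  · simpa using hb
  · simpa using hc
  · simpa [← ha] using hone

theorem FF_section (V : Set SL2C) (hV : V ∈ nhds (1 : SL2C)) :
    ∃ c > 0, ∀ m : SL2C, dd (FF m) < c → ∃ v ∈ V, v⁻¹ * m ∈ Hr := by
  by_contra hcon
  push Not at hcon
  choose m hm1 hm2 using fun n : ℕ => hcon (1 / ((n : ℝ) + 1)) (by positivity)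
  -- entries of `FF (m n)` converge to those of `1`
  have hlim : Tendsto (fun n => dd (FF (m n))) atTop (nhds 0) :=
    squeeze_zero (fun n => by unfold dd; positivity) (fun n => (hm1 n).le)
      tendsto_one_div_add_atTop_nhds_zero_nat
  have hent : ∀ i j, Tendsto (fun n => (FF (m n)).1 i j) atTop
      (nhds ((1 : Matrix (Fin 2) (Fin 2) ℂ) i j)) := by
    intro i j
    rw [tendsto_iff_norm_sub_tendsto_zero]
    refine squeeze_zero (fun n => norm_nonneg _) (fun n => ?_) hlim
    have a1 := norm_nonneg ((FF (m n)).1 0 0 - 1)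
    have a2 := norm_nonneg ((FF (m n)).1 0 1)
    have a3 := norm_nonneg ((FF (m n)).1 1 0)
    have a4 := norm_nonneg ((FF (m n)).1 1 1 - 1)
    unfold dd
    fin_cases i <;> fin_cases j <;> simp <;> linarith
  -- `R = (1 + M)/2`
  let R : ℕ → Matrix (Fin 2) (Fin 2) ℂ := fun n => (2⁻¹ : ℂ) • (1 + (FF (m n)).1)
  have hR : Tendsto R atTop (nhds 1) := by
    refine tendsto_pi_nhds.mpr fun i => tendsto_pi_nhds.mpr fun j => ?_
    have := (((hent i j).const_add ((1 : Matrix (Fin 2) (Fin 2) ℂ) i j)).const_mul (2⁻¹ : ℂ))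
    have e : (2⁻¹ : ℂ) * ((1 : Matrix (Fin 2) (Fin 2) ℂ) i j + (1 : Matrix (Fin 2) (Fin 2) ℂ) i j) =
        (1 : Matrix (Fin 2) (Fin 2) ℂ) i j := by
      generalize (1 : Matrix (Fin 2) (Fin 2) ℂ) i j = z
      ring
    rw [e] at this
    exact this
  have hdet : Tendsto (fun n => (R n).det) atTop (nhds 1) := by
    have := ((continuous_id (X := Matrix (Fin 2) (Fin 2) ℂ)).matrix_det.tendsto 1).comp hR
    simpa [Function.comp_def] using this
  have hre : Tendsto (fun n => (R n).det.re) atTop (nhds 1) := by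
    have := (Complex.continuous_re.tendsto 1).comp hdet
    simpa [Function.comp_def] using this
  have hsq : Tendsto (fun n => ((Real.sqrt ((R n).det.re))⁻¹ : ℝ)) atTop (nhds 1) := by
    have := ((Real.continuous_sqrt.tendsto 1).comp hre).inv₀ (by simp)
    simpa using this
  have hsqC : Tendsto (fun n => (((Real.sqrt ((R n).det.re))⁻¹ : ℝ) : ℂ)) atTop (nhds 1) := by
    have := (Complex.continuous_ofReal.tendsto 1).comp hsq
    simpa [Function.comp_def] using this
  -- conjugation identity
  have hconj : ∀ n, (FF (m n)).1 * (R n).map (starRingEnd ℂ) = R n := by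
    intro n
    have h := congrArg Subtype.val (FF_cj (m n))
    have h' : (FF (m n)).1 * ((FF (m n)).1).map (starRingEnd ℂ) = 1 := h
    have e : (R n).map (starRingEnd ℂ) = (2⁻¹ : ℂ) • (1 + ((FF (m n)).1).map (starRingEnd ℂ)) := by
      ext i j
      fin_cases i <;> fin_cases j <;> simp [R, Complex.conj_ofNat, mul_add]
    rw [e, Matrix.mul_smul, Matrix.mul_add, h', Matrix.mul_one, add_comm]
  have hreal : ∀ n, (((R n).det.re : ℝ) : ℂ) = (R n).det := by
    intro n
    rw [← Complex.conj_eq_iff_re]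
    have h := congrArg Matrix.det (hconj n)
    rw [Matrix.det_mul, (FF (m n)).2, one_mul] at h
    conv_rhs => rw [← h]
    simp [Matrix.det_fin_two]
  let S : ℕ → Matrix (Fin 2) (Fin 2) ℂ := fun n => (((Real.sqrt ((R n).det.re))⁻¹ : ℝ) : ℂ) • R n
  have hS : Tendsto S atTop (nhds 1) := by
    have := hsqC.smul hR
    rwa [one_smul] at this
  have hpos : ∀ᶠ n in atTop, 0 < (R n).det.re := hre.eventually (lt_mem_nhds one_pos)
  have hV2 : V ∈ Filter.comap (Subtype.val : SL2C → Matrix (Fin 2) (Fin 2) ℂ) (nhds 1) := by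
    have h := slClosedEmb.toIsInducing.nhds_eq_comap (1 : SL2C)
    have h' : V ∈ nhds (1 : SL2C) := hV
    exact h ▸ h'
  obtain ⟨V', hV', hVV⟩ := hV2
  obtain ⟨n, hn1, hn2⟩ := (hpos.and (hS hV')).exists
  have hSdet : (S n).det = 1 := by
    simp only [S, Matrix.det_smul, Fintype.card_fin]
    have hr := hreal n
    generalize (R n).det = z at hr hn1 ⊢
    conv_lhs => rw [← hr]
    rw [Complex.ofReal_re]
    rw [← Complex.ofReal_pow, inv_pow, Real.sq_sqrt hn1.le, ← Complex.ofReal_mul,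
      inv_mul_cancel₀ hn1.ne', Complex.ofReal_one]
  have hSc : (FF (m n)).1 * (S n).map (starRingEnd ℂ) = S n := by
    have e : (S n).map (starRingEnd ℂ) =
        (((Real.sqrt ((R n).det.re))⁻¹ : ℝ) : ℂ) • (R n).map (starRingEnd ℂ) := by
      ext i j
      simp [S]
    rw [e, Matrix.mul_smul, hconj]
  let v : SL2C := ⟨S n, hSdet⟩
  refine hm2 n v (hVV hn2) (FF_eq_iff _ _ ?_)
  have : FF (m n) * cj v = v := Subtype.ext hSc
  conv_lhs => rw [FF, ← this]
  have h2 : cj (FF (m n) * cj v) = cj v := congrArg cj this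
  rw [h2, mul_inv_cancel_right]

def del (p q : SL2C) : ℝ := dd (FF (p⁻¹ * q))

theorem del_mul (a p q : SL2C) : del p (a * q) = del (a⁻¹ * p) q := by
  simp [del, mul_assoc]

theorem continuous_del (q : SL2C) : Continuous fun p => del p q :=
  continuous_dd.comp (continuous_FF.comp (continuous_inv.mul continuous_const))

theorem del_congr (p q r : SL2C) (h : q⁻¹ * r ∈ Hr) : del p r = del p q := by
  have : p⁻¹ * r = p⁻¹ * q * (q⁻¹ * r) := by group
  rw [del, del, this, FF_mul_right _ _ h]

def BB (L : Subgroup SL2C) (g : SL2C) : Set SL2C :=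
  {p | del p g < 1 ∧ ∀ γ ∈ L, g⁻¹ * (γ * g) ∉ Hr → del p g < del p (γ * g)}

def NN (L : Subgroup SL2C) (g γ : SL2C) : Set SL2C := {p | γ⁻¹ * p ∈ interior (BB L g)}

theorem isOpen_NN (L : Subgroup SL2C) (g γ : SL2C) : IsOpen (NN L g γ) :=
  isOpen_interior.preimage (continuous_const.mul continuous_id)

theorem NN_disj (L : Subgroup SL2C) (g γ γ' p : SL2C) (hγ : γ ∈ L) (hγ' : γ' ∈ L)
    (h : p ∈ NN L g γ) (h' : p ∈ NN L g γ') : (γ * g)⁻¹ * (γ' * g) ∈ Hr := by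
  by_contra hn
  have h1 := (interior_subset h).2 (γ⁻¹ * γ') (L.mul_mem (L.inv_mem hγ) hγ')
    (by simpa [mul_assoc] using hn)
  have h2 := (interior_subset h').2 (γ'⁻¹ * γ) (L.mul_mem (L.inv_mem hγ') hγ) (by
    intro hc
    apply hn
    have := Hr.inv_mem hc
    simpa [mul_assoc] using this)
  rw [← del_mul, ← del_mul] at h1 h2
  simp only [mul_assoc, mul_inv_cancel_left] at h1 h2
  exact lt_asymm h1 h2

theorem path_arg (L : Subgroup SL2C) (g g' γ : SL2C) (hγ : γ ∈ L) (hg : g' ∈ NN L g γ)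
    (c : ℝ → SL2C) (hc : Continuous c) (hc0 : c 0 = 1)
    (hO : ∀ t, ∃ η ∈ L, g' * c t ∈ NN L g η) (t : ℝ) : del (g' * c t) (γ * g) < 1 := by
  let U : Set ℝ := ⋃ η : {η : SL2C // η ∈ L ∧ (γ * g)⁻¹ * (η * g) ∈ Hr},
    (fun t => g' * c t) ⁻¹' (NN L g η)
  let V : Set ℝ := ⋃ η : {η : SL2C // η ∈ L ∧ (γ * g)⁻¹ * (η * g) ∉ Hr},
    (fun t => g' * c t) ⁻¹' (NN L g η)
  have hcc : Continuous fun t => g' * c t := continuous_const.mul hc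
  have hU : IsOpen U := isOpen_iUnion fun η => (isOpen_NN L g η).preimage hcc
  have hV : IsOpen V := isOpen_iUnion fun η => (isOpen_NN L g η).preimage hcc
  have hd : Disjoint U V := by
    rw [Set.disjoint_left]
    intro s hs hs'
    obtain ⟨⟨η, h1, h2⟩, h3⟩ := Set.mem_iUnion.mp hs
    obtain ⟨⟨η', h1', h2'⟩, h3'⟩ := Set.mem_iUnion.mp hs'
    have := NN_disj L g η η' _ h1 h1' h3 h3'
    apply h2'
    have h := Hr.mul_mem h2 this
    simpa [mul_assoc] using h
  have hsub : (Set.univ : Set ℝ) ⊆ U ∪ V := by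
    intro s _
    obtain ⟨η, h1, h2⟩ := hO s
    by_cases h : (γ * g)⁻¹ * (η * g) ∈ Hr
    · exact Or.inl (Set.mem_iUnion.mpr ⟨⟨η, h1, h⟩, h2⟩)
    · exact Or.inr (Set.mem_iUnion.mpr ⟨⟨η, h1, h⟩, h2⟩)
  have h0 : (Set.univ ∩ U).Nonempty := by
    refine ⟨0, trivial, Set.mem_iUnion.mpr ⟨⟨γ, hγ, by simp [Hr.one_mem]⟩, ?_⟩⟩
    simpa [hc0] using hg
  have key := isPreconnected_univ.subset_left_of_subset_union hU hV hd hsub h0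
  obtain ⟨⟨η, h1, h2⟩, h3⟩ := Set.mem_iUnion.mp (key (Set.mem_univ t))
  have h4 := (interior_subset h3).1
  rw [← del_mul, del_congr _ _ _ h2] at h4
  exact h4

theorem core (L : Subgroup SL2C) (g : SL2C) (W : Set SL2C) (hW : IsOpen W) (hgW : g ∈ W)
    (hloc : ∀ γ ∈ L, ∀ h ∈ Hr, γ * g * h ∈ W → g⁻¹ * (γ * g) ∈ Hr) :
    ∃ O : Set SL2C, IsOpen O ∧ (∀ γ ∈ L, ∀ p ∈ O, γ * p ∈ O) ∧ (∀ h ∈ Hr, g * h ∈ O) ∧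
      ∀ g', (∀ h ∈ Hr, g' * h ∈ O) → ∃ γ ∈ L, ∃ h ∈ Hr, g' = γ * g * h := by
  refine ⟨⋃ γ : L, NN L g γ, isOpen_iUnion fun γ => isOpen_NN L g γ, ?_, ?_, ?_⟩
  · intro γ hγ p hp
    obtain ⟨η, hη⟩ := Set.mem_iUnion.mp hp
    refine Set.mem_iUnion.mpr ⟨⟨γ * η, L.mul_mem hγ η.2⟩, ?_⟩
    change (γ * (η : SL2C))⁻¹ * (γ * p) ∈ interior (BB L g)
    have : (γ * (η : SL2C))⁻¹ * (γ * p) = (η : SL2C)⁻¹ * p := by group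
    rw [this]
    exact hη
  · intro h hh
    refine Set.mem_iUnion.mpr ⟨1, ?_⟩
    change ((1 : L) : SL2C)⁻¹ * (g * h) ∈ interior (BB L g)
    rw [Subgroup.coe_one, inv_one, one_mul, mem_interior_iff_mem_nhds]
    have hcont : Continuous fun x : SL2C × SL2C => x.1 * x.2 * h⁻¹ :=
      (continuous_fst.mul continuous_snd).mul continuous_const
    have hmem : (fun x : SL2C × SL2C => x.1 * x.2 * h⁻¹) ⁻¹' W ∈ nhds (g * h, (1 : SL2C)) :=
      hcont.continuousAt (hW.mem_nhds (by simpa using hgW))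
    rw [nhds_prod_eq, Filter.mem_prod_iff] at hmem
    obtain ⟨U, hU, V, hV, hUV⟩ := hmem
    obtain ⟨c, hc, hcV⟩ := FF_section V hV
    have h0 : del (g * h) g = 0 := by
      have : (g * h)⁻¹ * g ∈ Hr := by simpa using Hr.inv_mem hh
      rw [del, (FF_eq_one _).mpr this, dd_one]
    have hlt : ∀ᶠ p in nhds (g * h), del p g < min 1 c := by
      refine (continuous_del g).continuousAt.eventually (gt_mem_nhds ?_)
      change del (g * h) g < min 1 c
      rw [h0]
      exact lt_min one_pos hc
    filter_upwards [hU, hlt] with p hpU hp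
    refine ⟨hp.trans_le (min_le_left _ _), fun γ hγ hn => ?_⟩
    refine (hp.trans_le (min_le_right _ _)).trans_le ?_
    by_contra hcon
    obtain ⟨v, hv, hvm⟩ := hcV _ (not_le.mp hcon)
    apply hn
    refine hloc γ hγ ((v⁻¹ * (p⁻¹ * (γ * g)))⁻¹ * h⁻¹) (Hr.mul_mem (Hr.inv_mem hvm) (Hr.inv_mem hh)) ?_
    have hw := hUV (Set.mk_mem_prod hpU hv)
    rw [Set.mem_preimage] at hw
    have e : γ * g * ((v⁻¹ * (p⁻¹ * (γ * g)))⁻¹ * h⁻¹) = p * v * h⁻¹ := by group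
    rw [e]
    exact hw
  · intro g' hg'
    have hO : ∀ h ∈ Hr, ∃ η ∈ L, g' * h ∈ NN L g η := by
      intro h hh
      obtain ⟨η, hη⟩ := Set.mem_iUnion.mp (hg' h hh)
      exact ⟨η, η.2, hη⟩
    obtain ⟨γ, hγ, hγN⟩ := hO 1 Hr.one_mem
    rw [mul_one] at hγN
    have hcj : ∀ k ∈ Hr, del (g' * k) (γ * g) = dd (k⁻¹ * FF (g'⁻¹ * (γ * g)) * k) := by
      intro k hk
      have e : (g' * k)⁻¹ * (γ * g) = k⁻¹ * (g'⁻¹ * (γ * g)) := by group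
      rw [del, e, FF_mul_left _ _ (Hr.inv_mem hk), inv_inv]
    have hM := bounded_conj (FF (g'⁻¹ * (γ * g)))
      (fun t => by
        rw [← hcj _ (up_mem t)]
        exact path_arg L g g' γ hγ hγN up continuous_up up_zero (fun s => hO _ (up_mem s)) t)
      (fun t => by
        rw [← hcj _ (lo_mem t)]
        exact path_arg L g g' γ hγ hγN lo continuous_lo lo_zero (fun s => hO _ (lo_mem s)) t)
    rw [FF_eq_one] at hM
    refine ⟨γ, hγ, _, Hr.inv_mem hM, by group⟩

theorem baire_loc (L : Subgroup SL2C) (g : SL2C) (ι : Type) [Countable ι] (s : ι → SL2C)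
    (hsL : ∀ i, s i ∈ L) (hs : ∀ γ ∈ L, ∃ i, (s i)⁻¹ * γ ∈ Subgroup.center SL2C ∧ (s i)⁻¹ * γ ∈ Hr)
    (hY : IsClosed {y : SL2C | ∃ γ ∈ L, ∃ h ∈ Hr, y = γ * g * h}) :
    ∃ W : Set SL2C, IsOpen W ∧ g ∈ W ∧
      ∀ γ ∈ L, ∀ h ∈ Hr, γ * g * h ∈ W → g⁻¹ * (γ * g) ∈ Hr := by
  set Y : Set SL2C := {y : SL2C | ∃ γ ∈ L, ∃ h ∈ Hr, y = γ * g * h} with hYdef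
  haveI : LocallyCompactSpace Y := hY.isClosedEmbedding_subtypeVal.locallyCompactSpace
  haveI : Nonempty Y := ⟨⟨g, 1, L.one_mem, 1, Hr.one_mem, by simp⟩⟩
  let f : ι → Set Y := fun i => {y | (s i * g)⁻¹ * y.1 ∈ Hr}
  have hf : ∀ i, IsClosed (f i) := fun i =>
    isClosed_Hr.preimage (continuous_const.mul continuous_subtype_val)
  have hU : ⋃ i, f i = Set.univ := by
    rw [Set.eq_univ_iff_forall]
    rintro ⟨y, γ, hγ, h, hh, rfl⟩
    obtain ⟨i, hi1, hi2⟩ := hs γ hγ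
    refine Set.mem_iUnion.mpr ⟨i, ?_⟩
    change (s i * g)⁻¹ * (γ * g * h) ∈ Hr
    have e : (s i * g)⁻¹ * (γ * g * h) = (s i)⁻¹ * γ * h := by
      have := Subgroup.mem_center_iff.mp hi1 g
      calc (s i * g)⁻¹ * (γ * g * h) = g⁻¹ * ((s i)⁻¹ * γ * g) * h := by group
        _ = (s i)⁻¹ * γ * h := by rw [← this]; group
    rw [e]
    exact Hr.mul_mem hi2 hh
  obtain ⟨i, ⟨y, hy⟩, hyi⟩ := nonempty_interior_of_iUnion_of_closed hf hU
  rw [mem_interior] at hyi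
  obtain ⟨t, ht, hto, hyt⟩ := hyi
  obtain ⟨W0, hW0, rfl⟩ := isOpen_induced_iff.mp hto
  have hk : (s i * g)⁻¹ * y ∈ Hr := ht hyt
  refine ⟨{w | s i * w * ((s i * g)⁻¹ * y) ∈ W0},
    hW0.preimage ((continuous_const.mul continuous_id).mul continuous_const), ?_, ?_⟩
  · have : s i * g * ((s i * g)⁻¹ * y) = y := by group
    change s i * g * ((s i * g)⁻¹ * y) ∈ W0
    rw [this]
    exact hyt
  · intro γ hγ h hh hw
    have hmem : s i * (γ * g * h) * ((s i * g)⁻¹ * y) ∈ Y :=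
      ⟨s i * γ, L.mul_mem (hsL i) hγ, h * ((s i * g)⁻¹ * y), Hr.mul_mem hh hk, by group⟩
    have h1 : (s i * g)⁻¹ * (s i * (γ * g * h) * ((s i * g)⁻¹ * y)) ∈ Hr :=
      @ht ⟨_, hmem⟩ hw
    have h2 := Hr.mul_mem (Hr.mul_mem h1 (Hr.inv_mem hk)) (Hr.inv_mem hh)
    have e : (s i * g)⁻¹ * (s i * (γ * g * h) * ((s i * g)⁻¹ * y)) * ((s i * g)⁻¹ * y)⁻¹ * h⁻¹
        = g⁻¹ * (γ * g) := by group
    rwa [e] at h2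

theorem center_Hr (z : SL2C) (hz : z ∈ Subgroup.center SL2C) : z ∈ Hr := by
  rw [Matrix.SpecialLinearGroup.mem_center_iff] at hz
  obtain ⟨r, hr, hz⟩ := hz
  have hr' : r = 1 ∨ r = -1 := sq_eq_one_iff.mp (by simpa using hr)
  rw [mem_Hr_iff]
  ext i j
  rw [cj_apply, ← hz]
  rcases hr' with rfl | rfl <;> fin_cases i <;> fin_cases j <;> simp

theorem pr_eq (p q : SL2C) : pr p = pr q ↔ p⁻¹ * q ∈ Subgroup.center SL2C :=
  QuotientGroup.eq

theorem pr_surj : Function.Surjective pr := QuotientGroup.mk_surjective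

theorem pr_mem_Hset (p : PSL2C) : p ∈ Hset ↔ ∃ h ∈ Hr, p = pr h := by
  constructor
  · rintro ⟨h, rfl⟩
    exact ⟨_, ⟨h, rfl⟩, rfl⟩
  · rintro ⟨_, ⟨h, rfl⟩, rfl⟩
    exact ⟨h, rfl⟩

theorem phi_eq (Γ : Subgroup PSL2C) (p q : SL2C) : phi Γ p = phi Γ q ↔ q * p⁻¹ ∈ Γ.comap pr := by
  unfold phi mkX
  rw [Quotient.eq'', QuotientGroup.rightRel_apply, Subgroup.mem_comap]
  simp

theorem phi_quot (Γ : Subgroup PSL2C) : Topology.IsQuotientMap (phi Γ) :=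
  (isQuotientMap_quotient_mk' (s := QuotientGroup.rightRel Γ)).comp
    (QuotientGroup.isQuotientMap_mk (Subgroup.center SL2C))

theorem orb_phi (Γ : Subgroup PSL2C) (g : SL2C) :
    orb Γ (phi Γ g) Hset = {z | ∃ h ∈ Hr, z = phi Γ (g * h)} := by
  have key : ∀ h, act Γ (phi Γ g) (pr h) = phi Γ (g * h) := by
    intro h
    change mkX Γ (pr g * pr h) = mkX Γ (pr (g * h))
    rw [map_mul]
  ext z
  constructor
  · rintro ⟨k, hk, rfl⟩
    obtain ⟨h, hh, rfl⟩ := (pr_mem_Hset k).mp hk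
    exact ⟨h, hh, key h⟩
  · rintro ⟨h, hh, rfl⟩
    exact ⟨pr h, (pr_mem_Hset _).mpr ⟨h, hh, rfl⟩, key h⟩

/-- If `Γ` is a lattice in `PSL(2,ℂ)` and `xH` is a closed `H`-orbit, then `xH`
is topologically isolated: there is an open set `O ⊇ xH` such that the only
closed `H`-orbit entirely contained in `O` is `xH` itself. -/
theorem closed_H_orbit_isolated
    (Γ : Subgroup PSL2C) (hdisc : DiscreteTopology Γ) (hlat : IsLattice Γ)
    (x : XΓ Γ) (hx : IsClosed (orb Γ x Hset)) :
    ∃ O : Set (XΓ Γ), IsOpen O ∧ orb Γ x Hset ⊆ O ∧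
      ∀ y : XΓ Γ, IsClosed (orb Γ y Hset) → orb Γ y Hset ⊆ O →
        orb Γ y Hset = orb Γ x Hset := by
  obtain ⟨g, rfl⟩ := (phi_quot Γ).surjective x
  set L : Subgroup SL2C := Γ.comap pr with hL
  haveI : Countable Γ := by
    haveI := hdisc
    haveI : SecondCountableTopology PSL2C :=
      QuotientGroup.instSecondCountableTopology (N := Subgroup.center SL2C)
    exact countable_of_Lindelof_of_discrete
  have hYc : IsClosed {y : SL2C | ∃ γ ∈ L, ∃ h ∈ Hr, y = γ * g * h} := by
    have : {y : SL2C | ∃ γ ∈ L, ∃ h ∈ Hr, y = γ * g * h} = phi Γ ⁻¹' (orb Γ (phi Γ g) Hset) := by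
      rw [orb_phi]
      ext y
      constructor
      · rintro ⟨γ, hγ, h, hh, rfl⟩
        refine ⟨h, hh, (phi_eq Γ _ _).mpr ?_⟩
        have e : g * h * (γ * g * h)⁻¹ = γ⁻¹ := by group
        rw [e]
        exact L.inv_mem hγ
      · rintro ⟨h, hh, he⟩
        have := (phi_eq Γ _ _).mp he.symm
        exact ⟨_, this, h, hh, by group⟩
    rw [this]
    exact hx.preimage (phi_quot Γ).continuous
  obtain ⟨W, hW, hgW, hloc⟩ := baire_loc L g Γ (fun γ => Function.surjInv pr_surj γ.1)
    (fun γ => by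
      rw [hL, Subgroup.mem_comap, Function.surjInv_eq pr_surj]
      exact γ.2)
    (fun γ hγ => by
      have hc : (Function.surjInv pr_surj (pr γ))⁻¹ * γ ∈ Subgroup.center SL2C := by
        rw [← pr_eq, Function.surjInv_eq pr_surj]
      exact ⟨⟨pr γ, hγ⟩, hc, center_Hr _ hc⟩)
    hYc
  obtain ⟨O, hO, hinv, hgO, hiso⟩ := core L g W hW hgW hloc
  have hpre : phi Γ ⁻¹' (phi Γ '' O) = O := by
    apply Set.Subset.antisymm
    · rintro p ⟨q, hq, he⟩
      have := hinv _ ((phi_eq Γ _ _).mp he) q hq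
      simpa using this
    · exact Set.subset_preimage_image _ _
  refine ⟨phi Γ '' O, ?_, ?_, ?_⟩
  · rw [← (phi_quot Γ).isOpen_preimage, hpre]
    exact hO
  · rw [orb_phi]
    rintro _ ⟨h, hh, rfl⟩
    exact ⟨_, hgO h hh, rfl⟩
  · intro y _ hyO
    obtain ⟨g', rfl⟩ := (phi_quot Γ).surjective y
    obtain ⟨γ, hγ, h, hh, rfl⟩ := hiso g' (fun h hh => by
      rw [← hpre]
      refine hyO ?_
      rw [orb_phi]
      exact ⟨h, hh, rfl⟩)
    have hk : ∀ k, phi Γ (γ * k) = phi Γ k := fun k => (phi_eq Γ _ _).mpr (by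
      have e : k * (γ * k)⁻¹ = γ⁻¹ := by group
      rw [e]
      exact L.inv_mem hγ)
    rw [orb_phi, orb_phi]
    ext z
    constructor
    · rintro ⟨k, hk', rfl⟩
      refine ⟨h * k, Hr.mul_mem hh hk', ?_⟩
      rw [mul_assoc, mul_assoc, hk]
    · rintro ⟨k, hk', rfl⟩
      refine ⟨h⁻¹ * k, Hr.mul_mem (Hr.inv_mem hh) hk', ?_⟩
      rw [mul_assoc, mul_assoc, hk, mul_inv_cancel_left]

end
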